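/- arXiv:2406.02599 — 12 statements merged into one kernel-verified Lean document; each statement's English description precedes it below -/
import Mathlib

section
/- For every j with 1 ≤ j ≤ m−1 and every x ∈ [B_j, B_{j+1}), the quantization mechanism is unbiased: Σ_{i=1}^{m} p(x,i)·B_i = x. -/
/-!
The mechanism draws a lower bin `l ≤ j` with weight `q j l` and, independently, an upper bin
`r > j` with weight `q (m - j) (m + 1 - r)`, then rounds `x` to `B l` or `B r` with the
probabilities that make the rounding unbiased:
`(B r - x) / (B r - B l) * B l + (x - B l) / (B r - B l) * B r = x`.
Accordingly the sum over `i ≤ j` and the sum over `i > j` are both written as double sums over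
the pairs `(l, r)`; added termwise they give the total weight of the pairs, which is `1`, times `x`.
-/

open Finset

/-- Output distribution of the quantization mechanism: for input `x ∈ [B j, B (j+1))`,
`outProb m B q j x i` is the probability that the output is bin `B i`. -/
noncomputable def outProb (m : ℕ) (B : ℕ → ℝ) (q : ℕ → ℕ → ℝ) (j : ℕ) (x : ℝ) (i : ℕ) : ℝ :=
  if i ≤ j then
    q j i * ∑ r ∈ Finset.Icc (j + 1) m, q (m - j) (m - r + 1) * ((B r - x) / (B r - B i))
  else
    q (m - j) (m + 1 - i) * ∑ l ∈ Finset.Icc 1 j, q j l * ((x - B l) / (B i - B l))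

/-- The quantization mechanism is unbiased: for every `x ∈ [B j, B (j+1))`,
`Σ_{i=1}^m p(x,i) B_i = x`. -/
theorem quantization_unbiased
    (m : ℕ) (hm : 2 ≤ m)
    (B : ℕ → ℝ)
    (hB : ∀ i j : ℕ, 1 ≤ i → i < j → j ≤ m → B i < B j)
    (q : ℕ → ℕ → ℝ)
    (hq_nonneg : ∀ n i : ℕ, 1 ≤ n → n ≤ m → 0 ≤ q n i)
    (hq_sum : ∀ n : ℕ, 1 ≤ n → n ≤ m → ∑ i ∈ Finset.Icc 1 n, q n i = 1)
    (j : ℕ) (hj1 : 1 ≤ j) (hj2 : j ≤ m - 1)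
    (x : ℝ) (hx1 : B j ≤ x) (hx2 : x < B (j + 1)) :
    ∑ i ∈ Finset.Icc 1 m, outProb m B q j x i * B i = x := by
  have hupper : ∑ r ∈ Finset.Icc (j + 1) m, q (m - j) (m + 1 - r) = 1 := by
    rw [← hq_sum (m - j) (by omega) (by omega)]
    refine Finset.sum_bij' (fun r _ => m + 1 - r) (fun k _ => m + 1 - k) ?_ ?_ ?_ ?_ ?_
    · intro r hr; simp only [Finset.mem_Icc] at *; omega
    · intro k hk; simp only [Finset.mem_Icc] at *; omega
    · intro r hr; simp only [Finset.mem_Icc] at *; omega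
    · intro k hk; simp only [Finset.mem_Icc] at *; omega
    · intro r hr; rfl
  have hsplit : Finset.Icc 1 m = Finset.Icc 1 j ∪ Finset.Icc (j + 1) m := by
    ext i; simp only [Finset.mem_Icc, Finset.mem_union]; omega
  have hdisj : Disjoint (Finset.Icc 1 j) (Finset.Icc (j + 1) m) := by
    rw [Finset.disjoint_left]; intro i; simp only [Finset.mem_Icc]; omega
  have hlow : ∑ l ∈ Finset.Icc 1 j, outProb m B q j x l * B l
      = ∑ l ∈ Finset.Icc 1 j, ∑ r ∈ Finset.Icc (j + 1) m,
          q j l * q (m - j) (m + 1 - r) * ((B r - x) / (B r - B l) * B l) := by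
    refine Finset.sum_congr rfl fun l hl => ?_
    rw [outProb, if_pos (Finset.mem_Icc.1 hl).2, Finset.mul_sum, Finset.sum_mul]
    refine Finset.sum_congr rfl fun r hr => ?_
    -- In `ℕ`, `m - r + 1` and `m + 1 - r` agree only because `r ≤ m`.
    have hr' : m - r + 1 = m + 1 - r := by
      have := (Finset.mem_Icc.1 hr).2
      omega
    rw [hr']; ring
  have hhigh : ∑ r ∈ Finset.Icc (j + 1) m, outProb m B q j x r * B r
      = ∑ l ∈ Finset.Icc 1 j, ∑ r ∈ Finset.Icc (j + 1) m,
          q j l * q (m - j) (m + 1 - r) * ((x - B l) / (B r - B l) * B r) := by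
    rw [Finset.sum_comm]
    refine Finset.sum_congr rfl fun r hr => ?_
    have hr' : ¬ r ≤ j := by
      have := (Finset.mem_Icc.1 hr).1
      omega
    rw [outProb, if_neg hr', Finset.mul_sum, Finset.sum_mul]
    exact Finset.sum_congr rfl fun l _ => by ring
  rw [hsplit, Finset.sum_union hdisj, hlow, hhigh, ← Finset.sum_add_distrib]
  calc _ = ∑ l ∈ Finset.Icc 1 j, ∑ r ∈ Finset.Icc (j + 1) m,
          q j l * q (m - j) (m + 1 - r) * x := by
        refine Finset.sum_congr rfl fun l hl => ?_
        rw [← Finset.sum_add_distrib]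
        refine Finset.sum_congr rfl fun r hr => ?_
        rw [Finset.mem_Icc] at hl hr
        have hne : B r - B l ≠ 0 := (sub_pos.2 (hB l r hl.1 (by omega) hr.2)).ne'
        rw [← mul_add]
        congr 1
        field_simp
        ring
    _ = (∑ l ∈ Finset.Icc 1 j, q j l) *
          (∑ r ∈ Finset.Icc (j + 1) m, q (m - j) (m + 1 - r)) * x := by
        rw [Finset.sum_mul_sum]
        simp only [Finset.sum_mul]
    _ = x := by rw [hupper, hq_sum j hj1 (by omega)]; ring
end

section
/- For all indices 1 ≤ i ≤ j ≤ m−1 and every x ∈ [B_j, B_{j+1}), the output probability of the ERM mechanism with uniform bins satisfies p(x,i) ≥ (2e^{−γ}/(m²(m−1)))·(m−j−1)·(m−j). -/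
/-!
On `{1, …, n}` every exponent in the ERM weights lies in `[-γ/2, 0]`, so each selection
probability `q_n(i)` is at least `exp(-γ/2) / n` (`qERM_lower_bound`). With bin width `h`, the
ratio `(B_r - x) / (B_r - B_i)` is at least `(r - j - 1) h / ((m - 1) h)`, because `x < B_{j+1}` and
`B_r - B_i` is at most the full range. Summing over `r` (`sum_bin_gaps`) gives
`p(x,i) ≥ exp(-γ) / (j (m - j)) · (m - j - 1)(m - j) / (2 (m - 1))`,
and `j (m - j) ≤ m² / 4` finishes the proof.
-/

open Finset

/-- ERM selection distribution with parameter `γ`: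
`q_j(i) = exp(γ(B i − B j)/(2(B j − B 1))) / Σ_{k=1}^j exp(γ(B k − B j)/(2(B j − B 1)))`.
(At `j = 1` this evaluates to `q_1(1) = 1`, since in Lean `0/0 = 0` and `exp 0 = 1`.) -/
noncomputable def qERM (γ : ℝ) (B : ℕ → ℝ) (j i : ℕ) : ℝ :=
  Real.exp (γ * (B i - B j) / (2 * (B j - B 1))) /
    ∑ k ∈ Finset.Icc 1 j, Real.exp (γ * (B k - B j) / (2 * (B j - B 1)))

lemma qERM_lower_bound (γ : ℝ) (hγ : 0 < γ) (B : ℕ → ℝ) (n i : ℕ) (hi : 1 ≤ i) (hin : i ≤ n)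
    (hlo : ∀ k, 1 ≤ k → k ≤ n → B 1 ≤ B k) (hhi : ∀ k, 1 ≤ k → k ≤ n → B k ≤ B n) :
    Real.exp (-γ / 2) / (n : ℝ) ≤ qERM γ B n i := by
  have hn : 1 ≤ n := hi.trans hin
  have hD : 0 ≤ B n - B 1 := sub_nonneg.2 (hlo n hn le_rfl)
  have hsum : ∑ k ∈ Finset.Icc 1 n, Real.exp (γ * (B k - B n) / (2 * (B n - B 1))) ≤ (n : ℝ) := by
    calc _ ≤ ∑ k ∈ Finset.Icc 1 n, (1 : ℝ) := by
          refine Finset.sum_le_sum fun k hk => ?_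
          rw [Finset.mem_Icc] at hk
          rw [Real.exp_le_one_iff]
          refine div_nonpos_of_nonpos_of_nonneg ?_ (by linarith)
          exact mul_nonpos_of_nonneg_of_nonpos hγ.le (sub_nonpos.2 (hhi k hk.1 hk.2))
      _ = (n : ℝ) := by simp
  have hpos : 0 < ∑ k ∈ Finset.Icc 1 n, Real.exp (γ * (B k - B n) / (2 * (B n - B 1))) :=
    Finset.sum_pos (fun _ _ => Real.exp_pos _) ⟨1, Finset.mem_Icc.2 ⟨le_rfl, hn⟩⟩
  have hexp : -γ / 2 ≤ γ * (B i - B n) / (2 * (B n - B 1)) := by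
    rcases hD.eq_or_lt with h0 | h0
    -- If `B n = B 1` (in particular if `n = 1`), the exponent is `_ / 0 = 0`.
    · rw [← h0]
      simp
      linarith
    · rw [le_div_iff₀ (by linarith)]
      nlinarith [mul_nonneg hγ.le (sub_nonneg.2 (hlo i hi hin))]
  unfold qERM
  exact div_le_div₀ (Real.exp_pos _).le (Real.exp_le_exp.2 hexp) hpos hsum

lemma sum_bin_gaps (j m : ℕ) (hjm : j ≤ m) :
    ∑ r ∈ Finset.Icc (j + 1) m, ((r : ℝ) - j - 1) = ((m : ℝ) - j - 1) * ((m : ℝ) - j) / 2 := by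
  induction m, hjm using Nat.le_induction with
  | base => simp
  | succ n hn ih =>
    rw [Finset.sum_Icc_succ_top (by omega), ih]
    push_cast
    ring

/-- For all `1 ≤ i ≤ j ≤ m−1` and `x ∈ [B j, B (j+1))`, the output probability of the ERM
mechanism with uniform bins satisfies
`p(x,i) ≥ (2 e^{−γ}/(m²(m−1))) (m−j−1)(m−j)`. -/
theorem erm_output_prob_lower_bound
    (m : ℕ) (hm : 2 ≤ m)
    (c Δ : ℝ) (hc : 0 < c) (hΔ : 0 ≤ Δ)
    (B : ℕ → ℝ)
    (hB : ∀ i : ℕ, 1 ≤ i → i ≤ m →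
      B i = -c - Δ + ((i : ℝ) - 1) * ((2 * c + 2 * Δ) / ((m : ℝ) - 1)))
    (γ : ℝ) (hγ : 0 < γ)
    (i j : ℕ) (hi : 1 ≤ i) (hij : i ≤ j) (hj : j ≤ m - 1)
    (x : ℝ) (hx1 : B j ≤ x) (hx2 : x < B (j + 1)) :
    2 * Real.exp (-γ) / ((m : ℝ) ^ 2 * ((m : ℝ) - 1)) * ((m : ℝ) - (j : ℝ) - 1) * ((m : ℝ) - (j : ℝ))
      ≤ outProb m B (qERM γ B) j x i := by
  set h : ℝ := (2 * c + 2 * Δ) / ((m : ℝ) - 1) with hh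
  have hm' : (2 : ℝ) ≤ m := by exact_mod_cast hm
  have hm1 : (0 : ℝ) < (m : ℝ) - 1 := by linarith
  have hpos : 0 < h := div_pos (by linarith) hm1
  have hjm : j + 1 ≤ m := by omega
  have hjm' : (j : ℝ) + 1 ≤ m := by exact_mod_cast hjm
  have hj1 : (1 : ℝ) ≤ j := by exact_mod_cast hi.trans hij
  have hi1 : (1 : ℝ) ≤ i := by exact_mod_cast hi
  have hij' : (i : ℝ) ≤ j := by exact_mod_cast hij
  have hmono : ∀ k l : ℕ, 1 ≤ k → k ≤ l → l ≤ m → B k ≤ B l := by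
    intro k l hk hkl hl
    rw [hB k hk (hkl.trans hl), hB l (hk.trans hkl) hl]
    have : (k : ℝ) ≤ l := by exact_mod_cast hkl
    nlinarith
  have hq : ∀ n k : ℕ, 1 ≤ k → k ≤ n → n ≤ m → Real.exp (-γ / 2) / (n : ℝ) ≤ qERM γ B n k :=
    fun n k hk hkn hn => qERM_lower_bound γ hγ B n k hk hkn
      (fun l hl hln => hmono 1 l le_rfl hl (hln.trans hn)) (fun l hl hln => hmono l n hl hln hn)
  have hterm : ∀ r ∈ Finset.Icc (j + 1) m,
      Real.exp (-γ / 2) / ((m : ℝ) - j) * (((r : ℝ) - j - 1) / ((m : ℝ) - 1)) ≤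
        qERM γ B (m - j) (m - r + 1) * ((B r - x) / (B r - B i)) := by
    intro r hr
    rw [Finset.mem_Icc] at hr
    have hr1 : (j : ℝ) + 1 ≤ r := by exact_mod_cast hr.1
    have hrm : (r : ℝ) ≤ m := by exact_mod_cast hr.2
    have hq1 := hq (m - j) (m - r + 1) (by omega) (by omega) (by omega)
    rw [Nat.cast_sub (by omega)] at hq1
    have hBr := hB r (by omega) hr.2
    have hBi := hB i hi (by omega)
    have hBj := hB (j + 1) (by omega) hjm
    push_cast at hBj
    have hgap : B r - B i = ((r : ℝ) - i) * h := by rw [hBr, hBi]; ring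
    have hnum : ((r : ℝ) - j - 1) * h ≤ B r - x := by rw [hBr]; nlinarith
    have hratio : ((r : ℝ) - j - 1) / ((m : ℝ) - 1) ≤ (B r - x) / (B r - B i) := by
      calc ((r : ℝ) - j - 1) / ((m : ℝ) - 1)
          = (((r : ℝ) - j - 1) * h) / (((m : ℝ) - 1) * h) := by
            rw [mul_div_mul_right _ _ hpos.ne']
        _ ≤ (B r - x) / (B r - B i) := by
            rw [hgap]
            refine div_le_div₀ (le_trans ?_ hnum) hnum ?_ ?_
            · exact mul_nonneg (by linarith) hpos.le
            · exact mul_pos (by linarith) hpos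
            · exact mul_le_mul_of_nonneg_right (by linarith) hpos.le
    have hmj : (0 : ℝ) < (m : ℝ) - j := by linarith
    refine mul_le_mul hq1 hratio (div_nonneg (by linarith) hm1.le) (le_trans ?_ hq1)
    positivity
  have hmj : (0 : ℝ) < (m : ℝ) - j := by linarith
  have hS := Finset.sum_le_sum hterm
  rw [← Finset.mul_sum, ← Finset.sum_div, sum_bin_gaps j m (by omega)] at hS
  have hqj := hq j i hi hij (by omega)
  have hmj1 : (0 : ℝ) ≤ (m : ℝ) - j - 1 := by linarith
  have hj0 : (0 : ℝ) < j := by linarith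
  have hexp : Real.exp (-γ) = Real.exp (-γ / 2) * Real.exp (-γ / 2) := by
    rw [← Real.exp_add]; congr 1; ring
  have key : 2 / (m : ℝ) ^ 2 ≤ 1 / (2 * (j * ((m : ℝ) - j))) := by
    rw [div_le_div_iff₀ (by positivity) (by positivity)]
    nlinarith [sq_nonneg ((m : ℝ) - 2 * j)]
  unfold outProb
  rw [if_pos hij]
  calc _ = 2 / (m : ℝ) ^ 2 *
        (Real.exp (-γ) * (((m : ℝ) - j - 1) * ((m : ℝ) - j) / ((m : ℝ) - 1))) := by
        field_simp
    _ ≤ 1 / (2 * (j * ((m : ℝ) - j))) *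
        (Real.exp (-γ) * (((m : ℝ) - j - 1) * ((m : ℝ) - j) / ((m : ℝ) - 1))) :=
        mul_le_mul_of_nonneg_right key (by positivity)
    _ = Real.exp (-γ / 2) / j * (Real.exp (-γ / 2) / ((m : ℝ) - j) *
        (((m : ℝ) - j - 1) * ((m : ℝ) - j) / 2 / ((m : ℝ) - 1))) := by
        rw [hexp]
        field_simp
    _ ≤ _ := mul_le_mul hqj hS (by positivity) (le_trans (by positivity) hqj)
end

section
/- On each interval between consecutive bins, each output probability is monotone: for every 1 ≤ k ≤ m−1 and all x, x' ∈ [B_k, B_{k+1}) with x ≤ x', one has p(x,i) ≥ p(x',i) for every i with 1 ≤ i ≤ k, and p(x,i) ≤ p(x',i) for every i with k+1 ≤ i ≤ m. -/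
/-!
For a fixed interval index `k`, each output probability is a nonnegative weight times a sum of
terms affine in `x`. For `i ≤ k` every slope is a nonpositive multiple of `1 / (B r - B i)` with
`i ≤ k < r`, and for `i > k` a nonnegative multiple of `1 / (B i - B l)` with `l ≤ k < i`. These
denominators are positive because the bins increase, so the inequalities hold termwise.
-/

open Finset

/-- On each interval between consecutive bins, each output probability is monotone:
for `x ≤ x'` in `[B k, B (k+1))`, `p(x,i) ≥ p(x',i)` for `1 ≤ i ≤ k` and
`p(x,i) ≤ p(x',i)` for `k+1 ≤ i ≤ m`. -/
theorem output_prob_monotone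
    (m : ℕ) (hm : 2 ≤ m)
    (B : ℕ → ℝ)
    (hB : ∀ i j : ℕ, 1 ≤ i → i < j → j ≤ m → B i < B j)
    (q : ℕ → ℕ → ℝ)
    (hq_nonneg : ∀ n i : ℕ, 1 ≤ n → n ≤ m → 0 ≤ q n i)
    (hq_sum : ∀ n : ℕ, 1 ≤ n → n ≤ m → ∑ i ∈ Finset.Icc 1 n, q n i = 1)
    (k : ℕ) (hk1 : 1 ≤ k) (hk2 : k ≤ m - 1)
    (x x' : ℝ) (hx1 : B k ≤ x) (hx2 : x < B (k + 1))
    (hx'1 : B k ≤ x') (hx'2 : x' < B (k + 1)) (hxx' : x ≤ x') :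
    (∀ i : ℕ, 1 ≤ i → i ≤ k → outProb m B q k x' i ≤ outProb m B q k x i) ∧
    (∀ i : ℕ, k + 1 ≤ i → i ≤ m → outProb m B q k x i ≤ outProb m B q k x' i) := by
  have hqk : ∀ i, 0 ≤ q k i := fun i => hq_nonneg k i hk1 (by omega)
  have hqmk : ∀ i, 0 ≤ q (m - k) i := fun i => hq_nonneg (m - k) i (by omega) (by omega)
  refine ⟨fun i hi1 hik => ?_, fun i hki him => ?_⟩
  · simp only [outProb, if_pos hik]
    refine mul_le_mul_of_nonneg_left (Finset.sum_le_sum fun r hr => ?_) (hqk i)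
    rw [Finset.mem_Icc] at hr
    have hir : B i < B r := hB i r hi1 (by omega) hr.2
    exact mul_le_mul_of_nonneg_left
      (div_le_div_of_nonneg_right (by linarith) (by linarith)) (hqmk _)
  · simp only [outProb, if_neg (show ¬ i ≤ k by omega)]
    refine mul_le_mul_of_nonneg_left (Finset.sum_le_sum fun l hl => ?_) (hqmk _)
    rw [Finset.mem_Icc] at hl
    have hli : B l < B i := hB l i hl.1 (by omega) him
    exact mul_le_mul_of_nonneg_left
      (div_le_div_of_nonneg_right (by linarith) (by linarith)) (hqk _)
end

section
/- The output distribution is symmetric around 0: for every 1 ≤ j ≤ m−1, every x strictly between B_j and B_{j+1} (i.e., x ∈ (B_j, B_{j+1})), and every i ∈ {1,…,m}, one has p(x,i) = p(−x, m+1−i). -/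
/-!
The reflection `r ↦ m + 1 - r` exchanges the bins above index `j` with the bins up to index
`m - j`, and by symmetry of the bins it negates their values, so `(B r - x) / (B r - B i)` becomes
`(-x - B l) / (B (m + 1 - i) - B l)` with `l = m + 1 - r`. Hence the lower branch of `outProb` at
`(j, x, i)` is, term by term, the upper branch at `(m - j, -x, m + 1 - i)`
(`outProb_reflect_of_le`). The case `i > j` is the same identity read from the reflected side,
since the reflection is an involution.
-/

open Finset

/-- The symmetry when the output bin lies in the lower branch. The input `x` is arbitrary: the
identity between the two branches is purely algebraic. -/
lemma outProb_reflect_of_le (m : ℕ) (B : ℕ → ℝ)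
    (hsym : ∀ i : ℕ, 1 ≤ i → i ≤ m → B i = -B (m + 1 - i))
    (q : ℕ → ℕ → ℝ) (j : ℕ) (hjm : j ≤ m) (x : ℝ) (i : ℕ) (hi1 : 1 ≤ i) (hij : i ≤ j) :
    outProb m B q j x i = outProb m B q (m - j) (-x) (m + 1 - i) := by
  have hlt : ¬ (m + 1 - i ≤ m - j) := by omega
  have hi : m + 1 - (m + 1 - i) = i := by omega
  have hj : m - (m - j) = j := by omega
  unfold outProb
  rw [if_pos hij, if_neg hlt, hi, hj]
  congr 1
  refine Finset.sum_bij' (fun r _ => m + 1 - r) (fun l _ => m + 1 - l) ?_ ?_ ?_ ?_ ?_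
  · intro r hr
    simp only [Finset.mem_Icc] at hr ⊢
    omega
  · intro l hl
    simp only [Finset.mem_Icc] at hl ⊢
    omega
  · intro r hr
    simp only [Finset.mem_Icc] at hr
    omega
  · intro l hl
    simp only [Finset.mem_Icc] at hl
    omega
  · intro r hr
    simp only [Finset.mem_Icc] at hr
    have hr' : m - r + 1 = m + 1 - r := by omega
    rw [hr', hsym r (by omega) hr.2, hsym i hi1 (by omega)]
    congr 2 <;> ring

/-- With symmetric bins `B i = −B (m+1−i)`, the output distribution is symmetric around 0:
for every `x ∈ (B j, B (j+1))` and every `i ∈ {1,…,m}`, `p(x,i) = p(−x, m+1−i)`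
(where `−x` lies in the interval `(B (m−j), B (m+1−j))`). -/
theorem output_prob_symmetric
    (m : ℕ) (hm : 2 ≤ m)
    (B : ℕ → ℝ)
    (hB : ∀ i j : ℕ, 1 ≤ i → i < j → j ≤ m → B i < B j)
    (hsym : ∀ i : ℕ, 1 ≤ i → i ≤ m → B i = -B (m + 1 - i))
    (q : ℕ → ℕ → ℝ)
    (hq_nonneg : ∀ n i : ℕ, 1 ≤ n → n ≤ m → 0 ≤ q n i)
    (hq_sum : ∀ n : ℕ, 1 ≤ n → n ≤ m → ∑ i ∈ Finset.Icc 1 n, q n i = 1)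
    (j : ℕ) (hj1 : 1 ≤ j) (hj2 : j ≤ m - 1)
    (x : ℝ) (hx1 : B j < x) (hx2 : x < B (j + 1))
    (i : ℕ) (hi1 : 1 ≤ i) (hi2 : i ≤ m) :
    outProb m B q j x i = outProb m B q (m - j) (-x) (m + 1 - i) := by
  rcases le_or_gt i j with hij | hij
  · exact outProb_reflect_of_le m B hsym q j (by omega) x i hi1 hij
  · have h := outProb_reflect_of_le m B hsym q (m - j) (by omega) (-x) (m + 1 - i)
      (by omega) (by omega)
    have hi : m + 1 - (m + 1 - i) = i := by omega
    have hj : m - (m - j) = j := by omega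
    rw [hi, hj, neg_neg] at h
    exact h.symm
end

section
/- For every 1 ≤ j ≤ m−1 and every x ∈ [B_j, B_{j+1}), the mean absolute error of the mechanism admits the closed form Σ_{i=1}^{m} p(x,i)·|B_i − x| = Σ_{i=1}^{j} Σ_{r=j+1}^{m} q_j(i)·q_{m−j}(m−r+1) · 2(x − B_i)(B_r − x)/(B_r − B_i). -/
/-!
The bins split into the lower ones (`i ≤ j`, where `|B i - x| = x - B i`) and the upper ones
(`r ≥ j + 1`, where `|B r - x| = B r - x`). Expanding `outProb`, each half of the error is the
same double sum over pairs `(i, r)` of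
`q_j(i) q_{m-j}(m-r+1) (x - B i)(B r - x) / (B r - B i)`, up to the order of summation; adding
the two halves produces the factor `2`.
-/

open Finset

/-- Closed form of the mean absolute error: for `x ∈ [B j, B (j+1))`,
`Σ_{i=1}^m p(x,i)|B i − x| =
 Σ_{i=1}^j Σ_{r=j+1}^m q_j(i) q_{m−j}(m−r+1) · 2(x − B i)(B r − x)/(B r − B i)`. -/
theorem mae_closed_form
    (m : ℕ) (hm : 2 ≤ m)
    (B : ℕ → ℝ)
    (hB : ∀ i j : ℕ, 1 ≤ i → i < j → j ≤ m → B i < B j)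
    (q : ℕ → ℕ → ℝ)
    (hq_nonneg : ∀ n i : ℕ, 1 ≤ n → n ≤ m → 0 ≤ q n i)
    (hq_sum : ∀ n : ℕ, 1 ≤ n → n ≤ m → ∑ i ∈ Finset.Icc 1 n, q n i = 1)
    (j : ℕ) (hj1 : 1 ≤ j) (hj2 : j ≤ m - 1)
    (x : ℝ) (hx1 : B j ≤ x) (hx2 : x < B (j + 1)) :
    ∑ i ∈ Finset.Icc 1 m, outProb m B q j x i * |B i - x| =
      ∑ i ∈ Finset.Icc 1 j, ∑ r ∈ Finset.Icc (j + 1) m,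
        q j i * q (m - j) (m - r + 1) * (2 * (x - B i) * (B r - x) / (B r - B i)) := by
  have hsplit : Finset.Icc 1 m = Finset.Icc 1 j ∪ Finset.Icc (j + 1) m := by
    ext i
    simp only [Finset.mem_union, Finset.mem_Icc]
    omega
  have hdisj : Disjoint (Finset.Icc 1 j) (Finset.Icc (j + 1) m) := by
    rw [Finset.disjoint_left]
    intro i hi hi'
    rw [Finset.mem_Icc] at hi hi'
    omega
  have hlow : ∀ i ∈ Finset.Icc 1 j, outProb m B q j x i * |B i - x| =
      ∑ r ∈ Finset.Icc (j + 1) m,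
        q j i * q (m - j) (m - r + 1) * ((x - B i) * (B r - x) / (B r - B i)) := by
    intro i hi
    rw [Finset.mem_Icc] at hi
    have hix : B i ≤ x := by
      rcases hi.2.eq_or_lt with h | h
      · rwa [h]
      · exact (hB i j hi.1 h (by omega)).le.trans hx1
    rw [outProb, if_pos hi.2, abs_of_nonpos (sub_nonpos.2 hix), Finset.mul_sum, Finset.sum_mul]
    exact Finset.sum_congr rfl fun r _ => by ring
  have hhigh : ∀ r ∈ Finset.Icc (j + 1) m, outProb m B q j x r * |B r - x| =
      ∑ i ∈ Finset.Icc 1 j,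
        q j i * q (m - j) (m - r + 1) * ((x - B i) * (B r - x) / (B r - B i)) := by
    intro r hr
    rw [Finset.mem_Icc] at hr
    have hxr : x ≤ B r := by
      rcases hr.1.eq_or_lt with h | h
      · rw [← h]
        exact hx2.le
      · exact hx2.le.trans (hB (j + 1) r (by omega) h hr.2).le
    -- The two index conventions for the upper bins agree in truncated subtraction since `r ≤ m`.
    have hidx : m + 1 - r = m - r + 1 := by omega
    rw [outProb, if_neg (by omega), abs_of_nonneg (sub_nonneg.2 hxr), hidx, Finset.mul_sum,
      Finset.sum_mul]
    exact Finset.sum_congr rfl fun i _ => by ring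
  rw [hsplit, Finset.sum_union hdisj, Finset.sum_congr rfl hlow, Finset.sum_congr rfl hhigh,
    Finset.sum_comm (s := Finset.Icc (j + 1) m), ← Finset.sum_add_distrib]
  refine Finset.sum_congr rfl fun i _ => ?_
  rw [← Finset.sum_add_distrib]
  exact Finset.sum_congr rfl fun r _ => by ring
end

section
/- (Lemma 1) For every 1 ≤ j ≤ m−1 and every x ∈ [B_j, B_{j+1}), the mean absolute error of the mechanism satisfies Σ_{i=1}^{m} p(x,i)·|B_i − x| ≤ (1/2)·(ζ_{m−j} + (B_{j+1} − B_j) + ζ_j). -/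
/-!
Write `u l = q j l` for the weights on the left bins `l ≤ j` and `w r = q (m - j) (m + 1 - r)` for
those on the right bins `r > j`. Both halves of the mean absolute error are double sums over pairs
`(l, r)` with the same summand, so the error equals
`∑ l, ∑ r, u l * w r * (2 (B r - x) (x - B l) / (B r - B l))`. By AM-GM
(`two_mul_mul_div_add_le`) this is at most `∑ l, ∑ r, u l * w r * (B r - B l) / 2`. Since `u` and
`w` have total mass one, that bound is half the difference of the means of `B` under `w` and `u`,
and the symmetry of the bins identifies this difference with `ζ_{m-j} + (B (j+1) - B j) + ζ_j`.
-/

open Finset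

/-- `ζ_n = Σ_{i=1}^n q_n(i) (B n − B i)`. -/
noncomputable def zeta (B : ℕ → ℝ) (q : ℕ → ℕ → ℝ) (n : ℕ) : ℝ :=
  ∑ i ∈ Finset.Icc 1 n, q n i * (B n - B i)

/-- AM-GM, with `a = B r - x` and `b = x - B l` the distances from the input to a pair of bins. -/
lemma two_mul_mul_div_add_le {a b : ℝ} (h : 0 < a + b) :
    2 * (a * b / (a + b)) ≤ (a + b) / 2 := by
  rw [← mul_div_assoc, div_le_div_iff₀ h two_pos]
  nlinarith [sq_nonneg (a - b)]

lemma sum_Icc_reflect (m j : ℕ) (f : ℕ → ℝ) :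
    ∑ r ∈ Finset.Icc (j + 1) m, f (m + 1 - r) = ∑ i ∈ Finset.Icc 1 (m - j), f i := by
  refine Finset.sum_nbij' (fun r => m + 1 - r) (fun i => m + 1 - i) ?_ ?_ ?_ ?_ ?_
  · intro a ha; simp only [Finset.mem_Icc] at *; omega
  · intro a ha; simp only [Finset.mem_Icc] at *; omega
  · intro a ha; simp only [Finset.mem_Icc] at *; omega
  · intro a ha; simp only [Finset.mem_Icc] at *; omega
  · intro a _; rfl

lemma sum_Icc_split {m j : ℕ} (hj : j ≤ m) (f : ℕ → ℝ) :
    ∑ i ∈ Finset.Icc 1 m, f i =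
      ∑ i ∈ Finset.Icc 1 j, f i + ∑ i ∈ Finset.Icc (j + 1) m, f i := by
  rw [← Finset.sum_union]
  · congr 1
    ext i; simp only [Finset.mem_union, Finset.mem_Icc]; omega
  · rw [Finset.disjoint_left]
    intro i; simp only [Finset.mem_Icc]; omega

/-- (Lemma 1) For every `x ∈ [B j, B (j+1))`, the mean absolute error satisfies
`Σ_{i=1}^m p(x,i)|B i − x| ≤ (1/2)(ζ_{m−j} + (B (j+1) − B j) + ζ_j)`. -/
theorem mae_upper_bound
    (m : ℕ) (hm : 2 ≤ m)
    (B : ℕ → ℝ)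
    (hB : ∀ i j : ℕ, 1 ≤ i → i < j → j ≤ m → B i < B j)
    (hsym : ∀ i : ℕ, 1 ≤ i → i ≤ m → B i = -B (m + 1 - i))
    (q : ℕ → ℕ → ℝ)
    (hq_nonneg : ∀ n i : ℕ, 1 ≤ n → n ≤ m → 0 ≤ q n i)
    (hq_sum : ∀ n : ℕ, 1 ≤ n → n ≤ m → ∑ i ∈ Finset.Icc 1 n, q n i = 1)
    (j : ℕ) (hj1 : 1 ≤ j) (hj2 : j ≤ m - 1)
    (x : ℝ) (hx1 : B j ≤ x) (hx2 : x < B (j + 1)) :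
    ∑ i ∈ Finset.Icc 1 m, outProb m B q j x i * |B i - x| ≤
      (1 / 2) * (zeta B q (m - j) + (B (j + 1) - B j) + zeta B q j) := by
  have hjm : j ≤ m := by omega
  have hle : ∀ l ∈ Finset.Icc 1 j, B l ≤ x := by
    intro l hl
    rw [Finset.mem_Icc] at hl
    rcases hl.2.lt_or_eq with h | h
    · exact (hB l j hl.1 h hjm).le.trans hx1
    · rwa [h]
  have hlt : ∀ r ∈ Finset.Icc (j + 1) m, x < B r := by
    intro r hr
    rw [Finset.mem_Icc] at hr
    rcases hr.1.lt_or_eq with h | h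
    · exact hx2.trans (hB (j + 1) r (by omega) h hr.2)
    · rwa [← h]
  set w : ℕ → ℝ := fun r => q (m - j) (m + 1 - r) with hw
  have hu1 : ∑ l ∈ Finset.Icc 1 j, q j l = 1 := hq_sum j hj1 hjm
  have hw1 : ∑ r ∈ Finset.Icc (j + 1) m, w r = 1 := by
    rw [sum_Icc_reflect m j (q (m - j))]
    exact hq_sum (m - j) (by omega) (by omega)
  have hleft : ∑ i ∈ Finset.Icc 1 j, outProb m B q j x i * |B i - x| =
      ∑ l ∈ Finset.Icc 1 j, ∑ r ∈ Finset.Icc (j + 1) m,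
        q j l * w r * ((B r - x) * (x - B l) / ((B r - x) + (x - B l))) := by
    refine Finset.sum_congr rfl fun l hl => ?_
    have h1 := hle l hl
    rw [outProb, if_pos (Finset.mem_Icc.mp hl).2, abs_of_nonpos (by linarith), mul_assoc,
      Finset.sum_mul, Finset.mul_sum]
    refine Finset.sum_congr rfl fun r hr => ?_
    have h2 : m - r + 1 = m + 1 - r := by
      have := (Finset.mem_Icc.mp hr).2
      omega
    rw [h2, hw, sub_add_sub_cancel]
    ring
  have hright : ∑ i ∈ Finset.Icc (j + 1) m, outProb m B q j x i * |B i - x| =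
      ∑ l ∈ Finset.Icc 1 j, ∑ r ∈ Finset.Icc (j + 1) m,
        q j l * w r * ((B r - x) * (x - B l) / ((B r - x) + (x - B l))) := by
    rw [Finset.sum_comm]
    refine Finset.sum_congr rfl fun r hr => ?_
    have h1 := hlt r hr
    have h2 : ¬ r ≤ j := by
      have := (Finset.mem_Icc.mp hr).1
      omega
    rw [outProb, if_neg h2, abs_of_nonneg (by linarith), mul_assoc,
      Finset.sum_mul, Finset.mul_sum]
    refine Finset.sum_congr rfl fun l hl => ?_
    rw [hw, sub_add_sub_cancel]
    ring
  have hmean : ∑ l ∈ Finset.Icc 1 j, ∑ r ∈ Finset.Icc (j + 1) m, q j l * w r * (B r - B l) =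
      ∑ r ∈ Finset.Icc (j + 1) m, w r * B r - ∑ l ∈ Finset.Icc 1 j, q j l * B l := by
    have h1 : ∀ l ∈ Finset.Icc 1 j, ∑ r ∈ Finset.Icc (j + 1) m, q j l * w r * (B r - B l) =
        q j l * (∑ r ∈ Finset.Icc (j + 1) m, w r * B r) - q j l * B l := by
      intro l _
      calc _ = q j l * (∑ r ∈ Finset.Icc (j + 1) m, w r * B r)
              - q j l * B l * ∑ r ∈ Finset.Icc (j + 1) m, w r := by
            rw [Finset.mul_sum, Finset.mul_sum, ← Finset.sum_sub_distrib]
            exact Finset.sum_congr rfl fun r _ => by ring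
        _ = _ := by rw [hw1, mul_one]
    rw [Finset.sum_congr rfl h1, Finset.sum_sub_distrib, ← Finset.sum_mul, hu1, one_mul]
  have hzj : zeta B q j = B j - ∑ l ∈ Finset.Icc 1 j, q j l * B l := by
    simp only [zeta, mul_sub, Finset.sum_sub_distrib, ← Finset.sum_mul, hu1, one_mul]
  have hzm : zeta B q (m - j) = ∑ r ∈ Finset.Icc (j + 1) m, w r * B r - B (j + 1) := by
    have h1 : B (m - j) = -B (j + 1) := by
      rw [hsym (m - j) (by omega) (by omega)]
      congr 2
      omega
    have h2 : ∑ r ∈ Finset.Icc (j + 1) m, w r * B r =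
        ∑ r ∈ Finset.Icc (j + 1) m, w r * -B (m + 1 - r) := by
      refine Finset.sum_congr rfl fun r hr => ?_
      rw [Finset.mem_Icc] at hr
      rw [← hsym r (by omega) hr.2]
    rw [h2, sum_Icc_reflect m j (fun i => q (m - j) i * -B i)]
    simp only [zeta, mul_sub, Finset.sum_sub_distrib, ← Finset.sum_mul, mul_neg,
      Finset.sum_neg_distrib, hq_sum (m - j) (by omega) (by omega), h1]
    ring
  calc ∑ i ∈ Finset.Icc 1 m, outProb m B q j x i * |B i - x|
      = ∑ l ∈ Finset.Icc 1 j, ∑ r ∈ Finset.Icc (j + 1) m,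
          q j l * w r * (2 * ((B r - x) * (x - B l) / ((B r - x) + (x - B l)))) := by
        rw [sum_Icc_split hjm, hleft, hright, ← two_mul]
        simp only [Finset.mul_sum]
        exact Finset.sum_congr rfl fun l _ => Finset.sum_congr rfl fun r _ => by ring
    _ ≤ ∑ l ∈ Finset.Icc 1 j, ∑ r ∈ Finset.Icc (j + 1) m,
          q j l * w r * (((B r - x) + (x - B l)) / 2) := by
        refine Finset.sum_le_sum fun l hl => Finset.sum_le_sum fun r hr => ?_
        have h1 := hle l hl
        have h2 := hlt r hr
        exact mul_le_mul_of_nonneg_left (two_mul_mul_div_add_le (by linarith))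
          (mul_nonneg (hq_nonneg _ _ hj1 hjm) (hq_nonneg _ _ (by omega) (by omega)))
    _ = (1 / 2) * ∑ l ∈ Finset.Icc 1 j, ∑ r ∈ Finset.Icc (j + 1) m,
          q j l * w r * (B r - B l) := by
        simp only [Finset.mul_sum]
        exact Finset.sum_congr rfl fun l _ => Finset.sum_congr rfl fun r _ => by ring
    _ = (1 / 2) * (zeta B q (m - j) + (B (j + 1) - B j) + zeta B q j) := by
        rw [hmean, hzj, hzm]
        ring
end

section
/- For every γ > 0 and every 1 ≤ j ≤ m, the expected distance of the ERM selection from the top bin satisfies Σ_{i=1}^{j} q_j(i)·(B_j − B_i) ≤ (2(B_j − B_1)/γ)·log j (with the convention that the right-hand side is 0 when j = 1). -/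
/-!
Put `x i = γ (B j - B i) / (2 (B j - B 1))`, so that `q_j(i) = exp (-x i) / Z` with
`Z = ∑ exp (-x k)`. The claim becomes `∑ exp (-x i) * x i ≤ Z * log j`, a form of the fact that
the entropy of a law on `j` points is at most `log j`. It follows by summing the tangent-line
bound `x - log j + 1 ≤ exp (x - log j)`, multiplied by `exp (-x)`, and using `1 ≤ Z`, which holds
because the top bin contributes `exp 0 = 1`. The case `j = 1` is separate because
`B j - B 1` vanishes there.
-/

open Finset

/-- Unnormalised entropy bound: a Gibbs weight with some zero energy has mean energy at most the
logarithm of the number of states. -/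
lemma sum_exp_neg_mul_le {ι : Type*} (s : Finset ι) (x : ι → ℝ) (a : ι) (ha : a ∈ s)
    (hxa : x a = 0) :
    ∑ i ∈ s, Real.exp (-x i) * x i ≤ (∑ i ∈ s, Real.exp (-x i)) * Real.log (s.card : ℝ) := by
  have hn : (0 : ℝ) < s.card := by exact_mod_cast Finset.card_pos.mpr ⟨a, ha⟩
  have hZ : 1 ≤ ∑ i ∈ s, Real.exp (-x i) := by
    have h := Finset.single_le_sum (f := fun i => Real.exp (-x i))
      (fun i _ => (Real.exp_pos _).le) ha
    simpa [hxa] using h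
  have hterm : ∀ i ∈ s, Real.exp (-x i) * x i ≤
      1 / (s.card : ℝ) + Real.exp (-x i) * (Real.log (s.card : ℝ) - 1) := by
    intro i _
    have h1 := Real.add_one_le_exp (x i - Real.log (s.card : ℝ))
    have h2 := mul_le_mul_of_nonneg_left h1 (Real.exp_pos (-x i)).le
    have h3 : Real.exp (-x i) * Real.exp (x i - Real.log (s.card : ℝ)) = 1 / (s.card : ℝ) := by
      rw [← Real.exp_add, show -x i + (x i - Real.log (s.card : ℝ)) = -Real.log (s.card : ℝ) by ring,
        Real.exp_neg, Real.exp_log hn, one_div]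
    linarith
  have hsum := Finset.sum_le_sum hterm
  rw [Finset.sum_add_distrib, ← Finset.sum_mul, Finset.sum_const, nsmul_eq_mul,
    mul_one_div_cancel hn.ne'] at hsum
  linarith

/-- For every `γ > 0` and `1 ≤ j ≤ m`, the expected distance of the ERM selection from the
top bin satisfies `Σ_{i=1}^j q_j(i)(B j − B i) ≤ (2(B j − B 1)/γ) log j`
(the right-hand side is `0` when `j = 1`, since `log 1 = 0` and `B 1 − B 1 = 0`). -/
theorem erm_expected_distance_bound
    (m : ℕ) (hm : 2 ≤ m)
    (B : ℕ → ℝ)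
    (hB : ∀ i j : ℕ, 1 ≤ i → i < j → j ≤ m → B i < B j)
    (γ : ℝ) (hγ : 0 < γ)
    (j : ℕ) (hj1 : 1 ≤ j) (hj2 : j ≤ m) :
    ∑ i ∈ Finset.Icc 1 j, qERM γ B j i * (B j - B i) ≤
      2 * (B j - B 1) / γ * Real.log (j : ℝ) := by
  rcases hj1.eq_or_lt with rfl | hj
  · simp
  have hD : 0 < B j - B 1 := sub_pos.mpr (hB 1 j le_rfl hj hj2)
  have key := sum_exp_neg_mul_le (Finset.Icc 1 j)
    (fun i => γ * (B j - B i) / (2 * (B j - B 1))) j (by simp [hj1]) (by simp)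
  have hexp : ∀ i, -(γ * (B j - B i) / (2 * (B j - B 1))) =
      γ * (B i - B j) / (2 * (B j - B 1)) := fun i => by ring
  simp only [hexp, Nat.card_Icc, Nat.add_sub_cancel] at key
  have hZ : 0 < ∑ k ∈ Finset.Icc 1 j, Real.exp (γ * (B k - B j) / (2 * (B j - B 1))) :=
    Finset.sum_pos (fun _ _ => Real.exp_pos _) ⟨1, by simp [hj1]⟩
  have hsum : ∑ i ∈ Finset.Icc 1 j, qERM γ B j i * (B j - B i) =
      2 * (B j - B 1) / γ * ((∑ i ∈ Finset.Icc 1 j, Real.exp (γ * (B i - B j) / (2 * (B j - B 1))) *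
        (γ * (B j - B i) / (2 * (B j - B 1)))) /
        ∑ k ∈ Finset.Icc 1 j, Real.exp (γ * (B k - B j) / (2 * (B j - B 1)))) := by
    rw [Finset.sum_div, Finset.mul_sum]
    refine Finset.sum_congr rfl fun i _ => ?_
    rw [qERM]
    -- Hiding the exponential weight lets `field_simp` cancel only the scalar factors.
    generalize Real.exp (γ * (B i - B j) / (2 * (B j - B 1))) = e
    field_simp
  rw [hsum]
  refine mul_le_mul_of_nonneg_left ?_ (by positivity)
  rw [div_le_iff₀ hZ, mul_comm (Real.log _)]
  exact key
end

section
/- (Theorem 4, general input distribution) For every nonnegative integrable function f on [−c, c], the density-weighted mean absolute error satisfies ∫_{−c}^{c} ( Σ_{i=1}^{m} p(x,i)·|B_i − x| )·f(x) dx ≤ Σ_{n=s−1}^{t} ( ζ^r_{m−n} + (B_{n+1} − B_n) + ζ^l_n ) · ∫_{max(B_n,−c)}^{min(B_{n+1},c)} f(x) dx. -/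
/-!
Fix `x ∈ [B n, B (n + 1))`. Each factor `(B r - x) / (B r - B i)` with `i ≤ n < r` lies in `[0, 1]`,
so `p(x, i) ≤ q^l_n(i)` on the left of `x`, and likewise `p(x, i) ≤ q^r_{m-n}(m + 1 - i)` on the
right. Hence the absolute error at `x` is at most
`∑ q^l_n(i) (x - B i) + ∑ q^r_{m-n}(m + 1 - i) (B i - x) = (x - B n + ζ^l_n) + (B (n+1) - x + ζ^r_{m-n})`,
where `x` cancels (`error_le`). The interval `[-c, c]` is cut at the bins clamped to `[-c, c]`, and
the constant pointwise bound is integrated against `f` over each piece. The Bochner integral on the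
left is zero when the integrand is not integrable; this case only needs the right-hand side to be
nonnegative.
-/


open Finset

/-- Output distribution of the quantization mechanism with separate left/right selection
distributions `ql`, `qr`: for input `x ∈ [B j, B (j+1))`, `outProb2 m B ql qr j x i` is the
probability that the output is bin `B i`. -/
noncomputable def outProb2 (m : ℕ) (B : ℕ → ℝ) (ql qr : ℕ → ℕ → ℝ) (j : ℕ) (x : ℝ) (i : ℕ) : ℝ :=
  if i ≤ j then
    ql j i * ∑ r ∈ Finset.Icc (j + 1) m, qr (m - j) (m - r + 1) * ((B r - x) / (B r - B i))
  else
    qr (m - j) (m + 1 - i) * ∑ l ∈ Finset.Icc 1 j, ql j l * ((x - B l) / (B i - B l))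

/-- The index `j ∈ {1,…,m−1}` such that `x ∈ [B j, B (j+1))` (for increasing bins and
`x` in range): the largest `j ≤ m−1` with `B j ≤ x`. -/
noncomputable def binIdx (m : ℕ) (B : ℕ → ℝ) (x : ℝ) : ℕ :=
  ((Finset.Icc 1 (m - 1)).filter (fun j => B j ≤ x)).sup id

/-- The output distribution as a function of the input `x`. -/
noncomputable def pFun2 (m : ℕ) (B : ℕ → ℝ) (ql qr : ℕ → ℕ → ℝ) (x : ℝ) (i : ℕ) : ℝ :=
  outProb2 m B ql qr (binIdx m B x) x i

/-- `ζ^l_j = Σ_{i=1}^j q^l_j(i)(B j − B i)`. -/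
noncomputable def zetaL (B : ℕ → ℝ) (ql : ℕ → ℕ → ℝ) (j : ℕ) : ℝ :=
  ∑ i ∈ Finset.Icc 1 j, ql j i * (B j - B i)

/-- `ζ^r_{m−j} = Σ_{i=j+1}^m q^r_{m−j}(m−i+1)(B i − B (j+1))` (indexed here by `j`). -/
noncomputable def zetaR (m : ℕ) (B : ℕ → ℝ) (qr : ℕ → ℕ → ℝ) (j : ℕ) : ℝ :=
  ∑ i ∈ Finset.Icc (j + 1) m, qr (m - j) (m - i + 1) * (B i - B (j + 1))

lemma sum_qr_reflect (m n : ℕ) (hn : n ≤ m) (q : ℕ → ℝ) :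
    ∑ i ∈ Finset.Icc (n + 1) m, q (m - i + 1) = ∑ i ∈ Finset.Icc 1 (m - n), q i := by
  refine Finset.sum_nbij' (fun i => m - i + 1) (fun i => m - i + 1) ?_ ?_ ?_ ?_ ?_ <;>
    simp only [Finset.mem_Icc] <;> intros <;> first | omega | trivial

lemma binIdx_eq (m : ℕ) (B : ℕ → ℝ)
    (hB : ∀ i j : ℕ, 1 ≤ i → i < j → j ≤ m → B i < B j)
    (n : ℕ) (hn1 : 1 ≤ n) (hnm : n + 1 ≤ m) (x : ℝ) (hx1 : B n ≤ x) (hx2 : x < B (n + 1)) :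
    binIdx m B x = n := by
  unfold binIdx
  apply le_antisymm
  · refine Finset.sup_le fun j hj => ?_
    simp only [Finset.mem_filter, Finset.mem_Icc] at hj
    by_contra hlt
    simp only [id, not_le] at hlt
    rcases (Nat.succ_le_of_lt hlt).eq_or_lt with h | h
    · have h' : n + 1 = j := h
      rw [← h'] at hj
      linarith [hj.2]
    · have := hB (n + 1) j (by omega) h (by omega)
      linarith [hj.2]
  · refine Finset.le_sup (f := id) (b := n) ?_
    simp only [Finset.mem_filter, Finset.mem_Icc]
    exact ⟨⟨hn1, by omega⟩, hx1⟩

/-- A convex combination of numbers that are at most `1` is at most `1`. -/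
lemma sum_mul_le_one (S : Finset ℕ) (q w : ℕ → ℝ) (hq : ∀ i ∈ S, 0 ≤ q i)
    (hs : ∑ i ∈ S, q i = 1) (hw : ∀ i ∈ S, w i ≤ 1) : ∑ i ∈ S, q i * w i ≤ 1 :=
  hs ▸ Finset.sum_le_sum fun i hi => mul_le_of_le_one_right (hq i hi) (hw i hi)

/-- The pointwise error bound: for `x` in the `n`-th bin interval, the mean absolute error is at
most the constant `ζ^r_{m-n} + (B (n+1) - B n) + ζ^l_n`. -/
lemma error_le (m : ℕ) (B : ℕ → ℝ)
    (hB : ∀ i j : ℕ, 1 ≤ i → i < j → j ≤ m → B i < B j)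
    (ql qr : ℕ → ℕ → ℝ)
    (hql_nonneg : ∀ n i : ℕ, 1 ≤ n → n ≤ m → 0 ≤ ql n i)
    (hql_sum : ∀ n : ℕ, 1 ≤ n → n ≤ m → ∑ i ∈ Finset.Icc 1 n, ql n i = 1)
    (hqr_nonneg : ∀ n i : ℕ, 1 ≤ n → n ≤ m → 0 ≤ qr n i)
    (hqr_sum : ∀ n : ℕ, 1 ≤ n → n ≤ m → ∑ i ∈ Finset.Icc 1 n, qr n i = 1)
    (n : ℕ) (hn1 : 1 ≤ n) (hnm : n + 1 ≤ m) (x : ℝ) (hx1 : B n ≤ x) (hx2 : x < B (n + 1)) :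
    ∑ i ∈ Finset.Icc 1 m, pFun2 m B ql qr x i * |B i - x| ≤
      zetaR m B qr n + (B (n + 1) - B n) + zetaL B ql n := by
  have hlow : ∀ i ∈ Finset.Icc 1 n, B i ≤ x := by
    intro i hi
    rw [Finset.mem_Icc] at hi
    rcases hi.2.eq_or_lt with h | h
    · exact h ▸ hx1
    · exact (hB i n hi.1 h (by omega)).le.trans hx1
  have hhigh : ∀ i ∈ Finset.Icc (n + 1) m, x < B i := by
    intro i hi
    rw [Finset.mem_Icc] at hi
    rcases hi.1.eq_or_lt with h | h
    · exact h ▸ hx2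
    · exact hx2.trans (hB (n + 1) i (by omega) h hi.2)
  have hl1 := hql_sum n hn1 (by omega)
  have hr1 : ∑ i ∈ Finset.Icc (n + 1) m, qr (m - n) (m - i + 1) = 1 := by
    rw [sum_qr_reflect m n (by omega) (qr (m - n))]
    exact hqr_sum _ (by omega) (by omega)
  have hsplit : ∀ F : ℕ → ℝ, ∑ i ∈ Finset.Icc 1 m, F i =
      ∑ i ∈ Finset.Icc 1 n, F i + ∑ i ∈ Finset.Icc (n + 1) m, F i := by
    intro F
    rw [← Finset.sum_union]
    · congr 1
      ext i
      simp only [Finset.mem_union, Finset.mem_Icc]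
      omega
    · rw [Finset.disjoint_left]
      simp only [Finset.mem_Icc]
      omega
  have hleft : ∑ i ∈ Finset.Icc 1 n, pFun2 m B ql qr x i * |B i - x| ≤
      ∑ i ∈ Finset.Icc 1 n, ql n i * (x - B i) := by
    refine Finset.sum_le_sum fun i hi => ?_
    have hix := hlow i hi
    rw [pFun2, binIdx_eq m B hB n hn1 hnm x hx1 hx2, outProb2, if_pos (Finset.mem_Icc.1 hi).2,
      abs_sub_comm, abs_of_nonneg (sub_nonneg.2 hix)]
    refine mul_le_mul_of_nonneg_right ?_ (sub_nonneg.2 hix)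
    refine mul_le_of_le_one_right (hql_nonneg n i hn1 (by omega)) ?_
    refine sum_mul_le_one _ (fun r => qr (m - n) (m - r + 1)) _
      (fun r _ => hqr_nonneg _ _ (by omega) (by omega)) hr1 fun r hr => ?_
    have := hhigh r hr
    exact (div_le_one (by linarith)).2 (by linarith)
  have hright : ∑ i ∈ Finset.Icc (n + 1) m, pFun2 m B ql qr x i * |B i - x| ≤
      ∑ i ∈ Finset.Icc (n + 1) m, qr (m - n) (m - i + 1) * (B i - x) := by
    refine Finset.sum_le_sum fun i hi => ?_
    have hix := hhigh i hi
    have hmem := Finset.mem_Icc.1 hi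
    rw [pFun2, binIdx_eq m B hB n hn1 hnm x hx1 hx2, outProb2, if_neg (by omega),
      abs_of_nonneg (sub_nonneg.2 hix.le), show m + 1 - i = m - i + 1 by omega]
    refine mul_le_mul_of_nonneg_right ?_ (sub_nonneg.2 hix.le)
    refine mul_le_of_le_one_right (hqr_nonneg _ _ (by omega) (by omega)) ?_
    refine sum_mul_le_one _ (ql n) _ (fun l _ => hql_nonneg _ _ hn1 (by omega)) hl1 fun l hl => ?_
    have := hlow l hl
    exact (div_le_one (by linarith)).2 (by linarith)
  have hL : ∑ i ∈ Finset.Icc 1 n, ql n i * (x - B i) = (x - B n) + zetaL B ql n := by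
    have : ∀ i, ql n i * (x - B i) = ql n i * (x - B n) + ql n i * (B n - B i) := fun i => by ring
    simp only [this, Finset.sum_add_distrib, ← Finset.sum_mul, hl1, zetaL, one_mul]
  have hR : ∑ i ∈ Finset.Icc (n + 1) m, qr (m - n) (m - i + 1) * (B i - x) =
      (B (n + 1) - x) + zetaR m B qr n := by
    have : ∀ i, qr (m - n) (m - i + 1) * (B i - x) = qr (m - n) (m - i + 1) * (B (n + 1) - x) +
        qr (m - n) (m - i + 1) * (B i - B (n + 1)) := fun i => by ring
    simp only [this, Finset.sum_add_distrib, ← Finset.sum_mul, hr1, zetaR, one_mul]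
  rw [hsplit]
  linarith

/-- (Theorem 4, general input distribution) For every nonnegative integrable `f` on `[−c,c]`,
`∫_{−c}^c (Σ_{i=1}^m p(x,i)|B i − x|) f(x) dx ≤
 Σ_{n=s−1}^t (ζ^r_{m−n} + (B (n+1) − B n) + ζ^l_n) ∫_{max(B n,−c)}^{min(B (n+1),c)} f(x) dx`. -/
theorem general_input_mae_bound
    (m : ℕ) (hm : 2 ≤ m)
    (c Δ : ℝ) (hc : 0 < c) (hΔ : 0 < Δ)
    (B : ℕ → ℝ)
    (hB : ∀ i j : ℕ, 1 ≤ i → i < j → j ≤ m → B i < B j)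
    (hB1 : B 1 = -c - Δ) (hBm : B m = c + Δ)
    (ql qr : ℕ → ℕ → ℝ)
    (hql_nonneg : ∀ n i : ℕ, 1 ≤ n → n ≤ m → 0 ≤ ql n i)
    (hql_sum : ∀ n : ℕ, 1 ≤ n → n ≤ m → ∑ i ∈ Finset.Icc 1 n, ql n i = 1)
    (hqr_nonneg : ∀ n i : ℕ, 1 ≤ n → n ≤ m → 0 ≤ qr n i)
    (hqr_sum : ∀ n : ℕ, 1 ≤ n → n ≤ m → ∑ i ∈ Finset.Icc 1 n, qr n i = 1)
    (s t : ℕ) (hs2 : 2 ≤ s) (hst : s ≤ t) (ht : t ≤ m - 1)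
    (hs_lt : B (s - 1) < -c) (hs_le : -c ≤ B s)
    (ht_le : B t ≤ c) (ht_lt : c < B (t + 1))
    (f : ℝ → ℝ)
    (hf_nonneg : ∀ x ∈ Set.Icc (-c) c, 0 ≤ f x)
    (hf_int : IntervalIntegrable f MeasureTheory.volume (-c) c) :
    (∫ x in (-c)..c, (∑ i ∈ Finset.Icc 1 m, pFun2 m B ql qr x i * |B i - x|) * f x) ≤
      ∑ n ∈ Finset.Icc (s - 1) t,
        (zetaR m B qr n + (B (n + 1) - B n) + zetaL B ql n) *
          ∫ x in (max (B n) (-c))..(min (B (n + 1)) c), f x := by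
  have hBle : ∀ i j : ℕ, 1 ≤ i → i ≤ j → j ≤ m → B i ≤ B j := by
    intro i j hi hij hj
    rcases hij.eq_or_lt with h | h
    · rw [h]
    · exact (hB i j hi h hj).le
  -- The cut points: the bins clamped to `[-c, c]`.
  set a : ℕ → ℝ := fun k => max (min (B k) c) (-c) with ha
  have ha_first : a (s - 1) = -c := by
    simp only [ha]
    exact max_eq_right ((min_le_left _ _).trans hs_lt.le)
  have ha_last : a (t + 1) = c := by
    simp only [ha]
    rw [min_eq_right ht_lt.le, max_eq_left (by linarith)]
  have ha_left : ∀ n ∈ Finset.Icc (s - 1) t, max (B n) (-c) = a n := by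
    intro n hn
    rw [Finset.mem_Icc] at hn
    have := hBle n t (by omega) hn.2 (by omega)
    simp only [ha]
    rw [min_eq_left (this.trans ht_le)]
  have ha_right : ∀ n ∈ Finset.Icc (s - 1) t, min (B (n + 1)) c = a (n + 1) := by
    intro n hn
    rw [Finset.mem_Icc] at hn
    have := hBle s (n + 1) (by omega) (by omega) (by omega)
    simp only [ha]
    exact (max_eq_left (le_min (hs_le.trans this) (by linarith))).symm
  have ha_mem : ∀ k, a k ∈ Set.Icc (-c) c := fun k =>
    ⟨le_max_right _ _, max_le (min_le_right _ _) (by linarith)⟩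
  have ha_mono : ∀ n ∈ Finset.Icc (s - 1) t, a n ≤ a (n + 1) := by
    intro n hn
    rw [Finset.mem_Icc] at hn
    exact max_le_max_right _ (min_le_min_right _ (hBle n (n + 1) (by omega) (by omega) (by omega)))
  have hsub : ∀ k l, Set.uIcc (a k) (a l) ⊆ Set.uIcc (-c) c := by
    intro k l
    rw [Set.uIcc_of_le (show -c ≤ c by linarith)]
    exact Set.uIcc_subset_Icc (ha_mem k) (ha_mem l)
  have hrhs : ∑ n ∈ Finset.Icc (s - 1) t, (zetaR m B qr n + (B (n + 1) - B n) + zetaL B ql n) *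
        ∫ x in (max (B n) (-c))..(min (B (n + 1)) c), f x =
      ∑ n ∈ Finset.Icc (s - 1) t, (zetaR m B qr n + (B (n + 1) - B n) + zetaL B ql n) *
        ∫ x in (a n)..(a (n + 1)), f x :=
    Finset.sum_congr rfl fun n hn => by rw [ha_left n hn, ha_right n hn]
  rw [hrhs]
  by_cases hg : IntervalIntegrable
      (fun x => (∑ i ∈ Finset.Icc 1 m, pFun2 m B ql qr x i * |B i - x|) * f x)
      MeasureTheory.volume (-c) c
  · rw [show Finset.Icc (s - 1) t = Finset.Ico (s - 1) (t + 1) by ext; simp] at *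
    have hsum := intervalIntegral.sum_integral_adjacent_intervals_Ico (a := a) (m := s - 1)
      (n := t + 1) (μ := MeasureTheory.volume) (by omega)
      (fun k _ => hg.mono_set (hsub k (k + 1)))
    rw [ha_first, ha_last] at hsum
    rw [← hsum]
    refine Finset.sum_le_sum fun n hn => ?_
    rw [← intervalIntegral.integral_const_mul]
    refine intervalIntegral.integral_mono_on_of_le_Ioo (ha_mono n hn)
      (hg.mono_set (hsub _ _)) ((hf_int.mono_set (hsub _ _)).const_mul _) fun x hx => ?_
    have h1 := ha_left n hn
    have h2 := ha_right n hn
    have hn' := Finset.mem_Ico.1 hn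
    refine mul_le_mul_of_nonneg_right ?_
      (hf_nonneg x ⟨(ha_mem n).1.trans hx.1.le, hx.2.le.trans (ha_mem (n + 1)).2⟩)
    refine error_le m B hB ql qr hql_nonneg hql_sum hqr_nonneg hqr_sum n (by omega) (by omega) x
      ?_ ?_
    · exact (le_max_left _ _).trans (h1.le.trans hx.1.le)
    · exact hx.2.trans_le (h2.ge.trans (min_le_left _ _))
  · rw [intervalIntegral.integral_undef hg]
    refine Finset.sum_nonneg fun n hn => mul_nonneg ?_ ?_
    · have hn' := Finset.mem_Icc.1 hn
      have hR : 0 ≤ zetaR m B qr n := Finset.sum_nonneg fun i hi => by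
        rw [Finset.mem_Icc] at hi
        exact mul_nonneg (hqr_nonneg _ _ (by omega) (by omega))
          (sub_nonneg.2 (hBle _ _ (by omega) hi.1 hi.2))
      have hL : 0 ≤ zetaL B ql n := Finset.sum_nonneg fun i hi => by
        rw [Finset.mem_Icc] at hi
        exact mul_nonneg (hql_nonneg _ _ (by omega) (by omega))
          (sub_nonneg.2 (hBle _ _ hi.1 hi.2 (by omega)))
      have := hBle n (n + 1) (by omega) (by omega) (by omega)
      linarith
    · exact intervalIntegral.integral_nonneg (ha_mono n hn) fun x hx =>
        hf_nonneg x ⟨(ha_mem n).1.trans hx.1, hx.2.trans (ha_mem (n + 1)).2⟩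
end

section
/- Let 1 ≤ i ≤ k ≤ m−2. If q_k(i) ≥ q_{k+1}(i) and q_{m−k}(m−r+1)·(B_r − B_k) ≥ q_{m−k−1}(m−r+1)·(B_r − B_{k+1}) for every r with k+2 ≤ r ≤ m, then the output probabilities at consecutive bin values satisfy p(B_k, i) ≥ p(B_{k+1}, i). -/
/-!
Since `i ≤ k`, both probabilities are a product of `q_j(i)` with a sum over the bins `r > j`, for
`j = k` and `j = k + 1`. The first factors are compared by `h1`. Dividing `h2` by `B r - B i > 0`
compares the two sums term by term for `r ≥ k + 2`, and the sum for `j = k` has one further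
nonnegative term, `r = k + 1`. All factors are nonnegative, so the products compare as well.
-/

open Finset

/-- If `q_k(i) ≥ q_{k+1}(i)` and `q_{m−k}(m−r+1)(B r − B k) ≥ q_{m−k−1}(m−r+1)(B r − B (k+1))`
for every `k+2 ≤ r ≤ m`, then `p(B k, i) ≥ p(B (k+1), i)` (where the input `B k` lies in
`[B k, B (k+1))` and `B (k+1)` lies in `[B (k+1), B (k+2))`). -/
theorem output_prob_decreasing_at_bins
    (m : ℕ) (hm : 3 ≤ m)
    (B : ℕ → ℝ)
    (hB : ∀ i j : ℕ, 1 ≤ i → i < j → j ≤ m → B i < B j)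
    (q : ℕ → ℕ → ℝ)
    (hq_nonneg : ∀ n i : ℕ, 1 ≤ n → n ≤ m → 0 ≤ q n i)
    (hq_sum : ∀ n : ℕ, 1 ≤ n → n ≤ m → ∑ i ∈ Finset.Icc 1 n, q n i = 1)
    (i k : ℕ) (hi : 1 ≤ i) (hik : i ≤ k) (hk : k ≤ m - 2)
    (h1 : q (k + 1) i ≤ q k i)
    (h2 : ∀ r : ℕ, k + 2 ≤ r → r ≤ m →
      q (m - k - 1) (m - r + 1) * (B r - B (k + 1)) ≤ q (m - k) (m - r + 1) * (B r - B k)) :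
    outProb m B q (k + 1) (B (k + 1)) i ≤ outProb m B q k (B k) i := by
  have hk1 : k + 1 < m := by omega
  have hBi : ∀ r, k + 1 ≤ r → r ≤ m → 0 < B r - B i := fun r hr hrm =>
    sub_pos.2 (hB i r hi (by omega) hrm)
  have hBk : ∀ r, k + 1 ≤ r → r ≤ m → 0 < B r - B k := fun r hr hrm =>
    sub_pos.2 (hB k r (by omega) (by omega) hrm)
  have hBk1 : ∀ r, k + 2 ≤ r → r ≤ m → 0 < B r - B (k + 1) := fun r hr hrm =>
    sub_pos.2 (hB (k + 1) r (by omega) (by omega) hrm)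
  unfold outProb
  rw [if_pos (by omega : i ≤ k + 1), if_pos hik, show m - (k + 1) = m - k - 1 by omega]
  refine mul_le_mul h1 ?_ ?_ (hq_nonneg k i (by omega) (by omega))
  · calc
      _ ≤ ∑ r ∈ Finset.Icc (k + 1 + 1) m,
            q (m - k) (m - r + 1) * ((B r - B k) / (B r - B i)) := by
          refine Finset.sum_le_sum fun r hr => ?_
          rw [Finset.mem_Icc] at hr
          rw [← mul_div_assoc, ← mul_div_assoc]
          exact div_le_div_of_nonneg_right (h2 r hr.1 hr.2) (hBi r (by omega) hr.2).le
      _ ≤ _ := by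
          -- the right-hand sum has the additional nonnegative term `r = k + 1`
          refine Finset.sum_le_sum_of_subset_of_nonneg
            (Finset.Icc_subset_Icc_left (by omega)) fun r hr _ => ?_
          rw [Finset.mem_Icc] at hr
          exact mul_nonneg (hq_nonneg _ _ (by omega) (by omega))
            (div_nonneg (hBk r hr.1 hr.2).le (hBi r hr.1 hr.2).le)
  · refine Finset.sum_nonneg fun r hr => ?_
    rw [Finset.mem_Icc] at hr
    exact mul_nonneg (hq_nonneg _ _ (by omega) (by omega))
      (div_nonneg (hBk1 r hr.1 hr.2).le (hBi r (by omega) hr.2).le)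
end

section
/- Let 1 ≤ j ≤ m−1, let x ∈ [B_j, B_{j+1}), and let i be an index with 2 ≤ i ≤ j. If q_j(i−1) ≤ q_j(i), then p(x, i−1) ≤ p(x, i). -/
/-!
For `i ≤ j`, the output probability is `q_j(i)` times a nonnegative combination of the ratios
`(B r - x) / (B r - B i)` with `r > j`. Their numerators are nonnegative and do not depend on `i`,
and their denominators are positive and decrease as `i` grows. Hence both factors of the product are
nonnegative and do not decrease from `i - 1` to `i`.
-/

open Finset

/-- For `x ∈ [B j, B (j+1))` and `2 ≤ i ≤ j`: if `q_j(i−1) ≤ q_j(i)` then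
`p(x, i−1) ≤ p(x, i)`. -/
theorem output_prob_monotone_in_index
    (m : ℕ) (hm : 2 ≤ m)
    (B : ℕ → ℝ)
    (hB : ∀ i j : ℕ, 1 ≤ i → i < j → j ≤ m → B i < B j)
    (q : ℕ → ℕ → ℝ)
    (hq_nonneg : ∀ n i : ℕ, 1 ≤ n → n ≤ m → 0 ≤ q n i)
    (hq_sum : ∀ n : ℕ, 1 ≤ n → n ≤ m → ∑ i ∈ Finset.Icc 1 n, q n i = 1)
    (j : ℕ) (hj1 : 1 ≤ j) (hj2 : j ≤ m - 1)
    (x : ℝ) (hx1 : B j ≤ x) (hx2 : x < B (j + 1))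
    (i : ℕ) (hi2 : 2 ≤ i) (hij : i ≤ j)
    (hq : q j (i - 1) ≤ q j i) :
    outProb m B q j x (i - 1) ≤ outProb m B q j x i := by
  have hi' : i - 1 ≤ j := by omega
  unfold outProb
  rw [if_pos hi', if_pos hij]
  have hqn : ∀ k, 0 ≤ q (m - j) k := fun k => hq_nonneg _ k (by omega) (by omega)
  have hBi : B (i - 1) < B i := hB _ _ (by omega) (by omega) (by omega)
  have hrx : ∀ r ∈ Finset.Icc (j + 1) m, 0 ≤ B r - x := by
    intro r hr
    rw [Finset.mem_Icc] at hr
    rcases hr.1.eq_or_lt with h | h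
    · rw [← h]; linarith
    · linarith [hB (j + 1) r (by omega) h hr.2]
  have hri : ∀ r ∈ Finset.Icc (j + 1) m, 0 < B r - B i := by
    intro r hr
    rw [Finset.mem_Icc] at hr
    linarith [hB i r (by omega) (by omega) hr.2]
  refine mul_le_mul hq (Finset.sum_le_sum fun r hr => ?_) (Finset.sum_nonneg fun r hr => ?_)
    (hq_nonneg _ _ hj1 (by omega))
  · exact mul_le_mul_of_nonneg_left
      (div_le_div_of_nonneg_left (hrx r hr) (hri r hr) (by linarith)) (hqn _)
  · exact mul_nonneg (hqn _) (div_nonneg (hrx r hr) (by linarith [hri r hr]))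
end

section
/- (Maximum part of Lemma 2) Assume that q_i(i) ≥ q_j(i) for all indices 1 ≤ i ≤ j ≤ m. Then for every i ∈ {1,…,m}, every 1 ≤ j ≤ m−1 and every x ∈ [B_j, B_{j+1}), the output probability satisfies p(x,i) ≤ max( q_i(i), q_{m+1−i}(m+1−i) ). -/
/-! Each interpolation factor `(B r - x) / (B r - B i)` or `(x - B l) / (B i - B l)` is at most `1`,
since `B i` lies on the far side of `x` from `B r` (resp. `B l`). The sum in the output
probability is therefore at most the total mass of a probability mass function, so
`p(x, i) ≤ q_j(i)` when `i ≤ j` and `p(x, i) ≤ q_{m-j}(m+1-i)` otherwise. The monotonicity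
hypothesis bounds these by `q_i(i)` and `q_{m+1-i}(m+1-i)` respectively. -/

open Finset

/-- The weights on the bins above `x` are those of `q_{m-j}` after the reflection
`r ↦ m - r + 1`, hence have total mass `1`. -/
lemma sum_upper_weights {m j : ℕ} {q : ℕ → ℕ → ℝ}
    (h : ∑ i ∈ Finset.Icc 1 (m - j), q (m - j) i = 1) :
    ∑ r ∈ Finset.Icc (j + 1) m, q (m - j) (m - r + 1) = 1 := by
  rw [← h]
  refine Finset.sum_bij' (fun r _ => m - r + 1) (fun k _ => m - k + 1) ?_ ?_ ?_ ?_ ?_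
  · intro r hr; rw [Finset.mem_Icc] at hr ⊢; omega
  · intro k hk; rw [Finset.mem_Icc] at hk ⊢; omega
  · intro r hr; rw [Finset.mem_Icc] at hr; omega
  · intro k hk; rw [Finset.mem_Icc] at hk; omega
  · intro r hr; rfl

/-- (Maximum part of Lemma 2) If `q_i(i) ≥ q_j(i)` for all `1 ≤ i ≤ j ≤ m`, then for every
`i ∈ {1,…,m}`, `1 ≤ j ≤ m−1`, and `x ∈ [B j, B (j+1))`,
`p(x,i) ≤ max(q_i(i), q_{m+1−i}(m+1−i))`. -/
theorem output_prob_max_bound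
    (m : ℕ) (hm : 2 ≤ m)
    (B : ℕ → ℝ)
    (hB : ∀ i j : ℕ, 1 ≤ i → i < j → j ≤ m → B i < B j)
    (q : ℕ → ℕ → ℝ)
    (hq_nonneg : ∀ n i : ℕ, 1 ≤ n → n ≤ m → 0 ≤ q n i)
    (hq_sum : ∀ n : ℕ, 1 ≤ n → n ≤ m → ∑ i ∈ Finset.Icc 1 n, q n i = 1)
    (hmono : ∀ i j : ℕ, 1 ≤ i → i ≤ j → j ≤ m → q j i ≤ q i i)
    (i : ℕ) (hi1 : 1 ≤ i) (hi2 : i ≤ m)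
    (j : ℕ) (hj1 : 1 ≤ j) (hj2 : j ≤ m - 1)
    (x : ℝ) (hx1 : B j ≤ x) (hx2 : x < B (j + 1)) :
    outProb m B q j x i ≤ max (q i i) (q (m + 1 - i) (m + 1 - i)) := by
  have hBle : ∀ a b : ℕ, 1 ≤ a → a ≤ b → b ≤ m → B a ≤ B b := by
    intro a b ha hab hb
    rcases hab.eq_or_lt with rfl | h
    · exact le_rfl
    · exact (hB a b ha h hb).le
  unfold outProb
  split_ifs with hij
  · refine le_trans ?_ (le_max_left _ _)
    have hsum : ∑ r ∈ Finset.Icc (j + 1) m,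
        q (m - j) (m - r + 1) * ((B r - x) / (B r - B i)) ≤ 1 := by
      rw [← sum_upper_weights (hq_sum (m - j) (by omega) (by omega))]
      refine Finset.sum_le_sum fun r hr => ?_
      rw [Finset.mem_Icc] at hr
      refine mul_le_of_le_one_right (hq_nonneg _ _ (by omega) (by omega)) ?_
      have h1 := hB i r hi1 (by omega) hr.2
      have h2 := hBle i j hi1 hij (by omega)
      rw [div_le_one (by linarith)]
      linarith
    exact (mul_le_of_le_one_right (hq_nonneg _ _ hj1 (by omega)) hsum).trans
      (hmono i j hi1 hij (by omega))
  · refine le_trans ?_ (le_max_right _ _)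
    have hsum : ∑ l ∈ Finset.Icc 1 j, q j l * ((x - B l) / (B i - B l)) ≤ 1 := by
      rw [← hq_sum j hj1 (by omega)]
      refine Finset.sum_le_sum fun l hl => ?_
      rw [Finset.mem_Icc] at hl
      refine mul_le_of_le_one_right (hq_nonneg _ _ hj1 (by omega)) ?_
      have h1 := hB l i hl.1 (by omega) hi2
      have h2 := hBle (j + 1) i (by omega) (by omega) hi2
      rw [div_le_one (by linarith)]
      linarith
    exact (mul_le_of_le_one_right (hq_nonneg _ _ (by omega) (by omega)) hsum).trans
      (hmono (m + 1 - i) (m - j) (by omega) (by omega) (by omega))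
end

section
/- (Lower bound on output probabilities under the linear constraints of Theorem 6) Assume: (i) q_j(i) ≥ q_{j+1}(i) for all 1 ≤ i ≤ j ≤ m−1; (ii) q_j(i) ≤ q_j(i+1) for all 1 ≤ i < j ≤ m; and (iii) q_{m−k+1}(m−r+1)·(B_r − B_k) ≥ q_{m−k}(m−r+1)·(B_r − B_{k+1}) for all k with s ≤ k ≤ t and all r with k+2 ≤ r ≤ m. Let Λ = q_{t−1}(1) · Σ_{r=t+1}^{m} q_{m−t+1}(m−r+1)·(B_r − B_t)/(B_r − B_1) (the left limit of p(·,1) at B_t). Then for every x ∈ [−c, c] and every i ∈ {1,…,m}, p(x,i) ≥ min( Λ, p(c,1) ). -/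
/-!
Reflection `x ↦ -x`, `i ↦ m + 1 - i` turns the branch `i > j` of the output distribution into the
branch `i ≤ j` for the cell `m - j` (`outProb_reflect`), so only outputs below the input matter,
provided each cell is taken closed, since reflection exchanges its endpoints. On such a branch the
probability is smallest at `i = 1`, by constraint (ii) and `B 1 ≤ B i`, and it decreases in `x`
(`outProb_ge_first`). Hence on the last cell `j = t` it is at least `p(c, 1)`, and on a cell `j < t`
at least the left limit of `p(·, 1)` at `B (j + 1)`. Constraints (i) and (iii) make these left
limits decrease along the cells (`leftLimit_step`), so the last of them, `Λ`, is the smallest.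
-/

open Finset

/-- The output distribution as a function of the input `x`. -/
noncomputable def pFun (m : ℕ) (B : ℕ → ℝ) (q : ℕ → ℕ → ℝ) (x : ℝ) (i : ℕ) : ℝ :=
  outProb m B q (binIdx m B x) x i

/-- An output above the input, seen in the mirror: the cell `j` becomes `m - j`. -/
lemma outProb_reflect (m : ℕ) (B : ℕ → ℝ) (q : ℕ → ℕ → ℝ)
    (hsym : ∀ i : ℕ, 1 ≤ i → i ≤ m → B i = -B (m + 1 - i))
    (j i : ℕ) (x : ℝ) (hj : j + 1 ≤ m) (hji : j < i) (him : i ≤ m) :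
    outProb m B q j x i = outProb m B q (m - j) (-x) (m + 1 - i) := by
  unfold outProb
  rw [if_neg (by omega), if_pos (by omega)]
  congr 1
  refine Finset.sum_nbij' (fun l => m + 1 - l) (fun r => m + 1 - r) ?_ ?_ ?_ ?_ ?_
  · intro l hl
    simp only [Finset.mem_Icc] at hl ⊢
    omega
  · intro r hr
    simp only [Finset.mem_Icc] at hr ⊢
    omega
  · intro l hl
    simp only [Finset.mem_Icc] at hl
    omega
  · intro r hr
    simp only [Finset.mem_Icc] at hr
    omega
  · intro l hl
    simp only [Finset.mem_Icc] at hl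
    have e1 : m - (m - j) = j := by omega
    have e2 : m - (m + 1 - l) + 1 = l := by omega
    rw [e1, e2, hsym l (by omega) (by omega), hsym i (by omega) (by omega)]
    congr 2 <;> ring

/-- Among the outputs below the input, the first bin is the least likely one, and its probability
decreases in the input within a closed cell. -/
lemma outProb_ge_first (m : ℕ) (B : ℕ → ℝ) (q : ℕ → ℕ → ℝ)
    (hB : ∀ i j : ℕ, 1 ≤ i → i < j → j ≤ m → B i < B j)
    (hq_nonneg : ∀ n i : ℕ, 1 ≤ n → n ≤ m → 0 ≤ q n i)
    (h2 : ∀ i j : ℕ, 1 ≤ i → i < j → j ≤ m → q j i ≤ q j (i + 1))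
    (j i : ℕ) (x y : ℝ) (hi : 1 ≤ i) (hij : i ≤ j) (hj : j + 1 ≤ m)
    (hxy : x ≤ y) (hy : y ≤ B (j + 1)) :
    outProb m B q j y 1 ≤ outProb m B q j x i := by
  have hBle : ∀ a b : ℕ, 1 ≤ a → a ≤ b → b ≤ m → B a ≤ B b := fun a b ha hab hb => by
    rcases hab.eq_or_lt with rfl | h
    · exact le_rfl
    · exact (hB a b ha h hb).le
  have hq1 : q j 1 ≤ q j i := by
    induction i, hi using Nat.le_induction with
    | base => exact le_rfl
    | succ n hn ih => exact (ih (by omega)).trans (h2 n j hn (by omega) (by omega))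
  unfold outProb
  rw [if_pos (by omega), if_pos hij]
  have hterm : ∀ r ∈ Finset.Icc (j + 1) m,
      0 ≤ q (m - j) (m - r + 1) * ((B r - y) / (B r - B 1)) ∧
      q (m - j) (m - r + 1) * ((B r - y) / (B r - B 1)) ≤
        q (m - j) (m - r + 1) * ((B r - x) / (B r - B i)) := by
    intro r hr
    simp only [Finset.mem_Icc] at hr
    have hqn := hq_nonneg (m - j) (m - r + 1) (by omega) (by omega)
    have a1 := hBle (j + 1) r (by omega) hr.1 hr.2
    have a2 := hBle 1 i le_rfl hi (by omega)
    have a3 := hB i r hi (by omega) hr.2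
    refine ⟨mul_nonneg hqn (div_nonneg (by linarith) (by linarith)),
      mul_le_mul_of_nonneg_left ?_ hqn⟩
    exact div_le_div₀ (by linarith) (by linarith) (by linarith) (by linarith)
  exact mul_le_mul hq1 (Finset.sum_le_sum fun r hr => (hterm r hr).2)
    (Finset.sum_nonneg fun r hr => (hterm r hr).1) (hq_nonneg j i (by omega) (by omega))

/-- The left limit of `p(·, 1)` at `B (k + 1)` is at most its left limit at `B k`. -/
lemma leftLimit_step (m : ℕ) (B : ℕ → ℝ) (q : ℕ → ℕ → ℝ)
    (hB : ∀ i j : ℕ, 1 ≤ i → i < j → j ≤ m → B i < B j)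
    (hq_nonneg : ∀ n i : ℕ, 1 ≤ n → n ≤ m → 0 ≤ q n i)
    (h1 : ∀ i j : ℕ, 1 ≤ i → i ≤ j → j ≤ m - 1 → q (j + 1) i ≤ q j i)
    (k : ℕ) (hk : 1 ≤ k) (hkm : k + 2 ≤ m)
    (h3 : ∀ r : ℕ, k + 1 + 2 ≤ r → r ≤ m → q (m - (k + 1)) (m - r + 1) * (B r - B (k + 1 + 1)) ≤
      q (m - (k + 1) + 1) (m - r + 1) * (B r - B (k + 1))) :
    outProb m B q (k + 1) (B (k + 1 + 1)) 1 ≤ outProb m B q k (B (k + 1)) 1 := by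
  unfold outProb
  rw [if_pos (by omega), if_pos hk]
  have e : m - (k + 1) + 1 = m - k := by omega
  have hnn : ∀ r ∈ Finset.Icc (k + 1) m,
      0 ≤ q (m - k) (m - r + 1) * ((B r - B (k + 1)) / (B r - B 1)) := by
    intro r hr
    simp only [Finset.mem_Icc] at hr
    have b1 := hB 1 r le_rfl (by omega) hr.2
    have b2 : B (k + 1) ≤ B r := by
      rcases hr.1.eq_or_lt with h | h
      · rw [h]
      · exact (hB _ _ (by omega) h hr.2).le
    exact mul_nonneg (hq_nonneg _ _ (by omega) (by omega))
      (div_nonneg (by linarith) (by linarith))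
  refine (mul_le_mul_of_nonneg_right (h1 1 k le_rfl hk (by omega)) ?_).trans
    (mul_le_mul_of_nonneg_left ?_ (hq_nonneg k 1 hk (by omega)))
  · refine Finset.sum_nonneg fun r hr => ?_
    simp only [Finset.mem_Icc] at hr
    have b1 := hB 1 r le_rfl (by omega) hr.2
    have b2 : B (k + 1 + 1) ≤ B r := by
      rcases hr.1.eq_or_lt with h | h
      · rw [h]
      · exact (hB _ _ (by omega) h hr.2).le
    exact mul_nonneg (hq_nonneg _ _ (by omega) (by omega))
      (div_nonneg (by linarith) (by linarith))
  · refine (Finset.sum_le_sum (g := fun r => q (m - k) (m - r + 1) *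
      ((B r - B (k + 1)) / (B r - B 1))) fun r hr => ?_).trans
      (Finset.sum_le_sum_of_subset_of_nonneg
        (Finset.Icc_subset_Icc (by omega) le_rfl) fun r hr _ => hnn r hr)
    have hr' := Finset.mem_Icc.mp hr
    rcases hr'.1.eq_or_lt with h | h
    · -- the term `r = k + 2` vanishes on the left; (iii) covers only `r ≥ k + 3`
      rw [← h, sub_self, zero_div, mul_zero, h]
      exact hnn r (Finset.mem_Icc.mpr ⟨by omega, hr'.2⟩)
    · have b1 := hB 1 r le_rfl (by omega) hr'.2
      have := h3 r (by omega) hr'.2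
      rw [e] at this
      rw [← mul_div_assoc, ← mul_div_assoc]
      exact div_le_div_of_nonneg_right this (by linarith)

lemma binIdx_spec (m : ℕ) (B : ℕ → ℝ) (x : ℝ) (k : ℕ) (hk : 1 ≤ k) (hkm : k ≤ m - 1)
    (hkx : B k ≤ x) (hx : x < B m) :
    k ≤ binIdx m B x ∧ binIdx m B x ≤ m - 1 ∧ B (binIdx m B x) ≤ x ∧
      x < B (binIdx m B x + 1) := by
  have hmem : k ∈ (Finset.Icc 1 (m - 1)).filter (fun j => B j ≤ x) := by
    simp [hk, hkm, hkx]
  obtain ⟨j, hj, hje⟩ := Finset.exists_mem_eq_sup _ ⟨k, hmem⟩ (id : ℕ → ℕ)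
  have hle : k ≤ binIdx m B x := Finset.le_sup (f := id) hmem
  have hjb : binIdx m B x = j := hje
  rw [hjb] at hle ⊢
  simp only [Finset.mem_filter, Finset.mem_Icc] at hj
  refine ⟨hle, hj.1.2, hj.2, ?_⟩
  by_contra! hcon
  by_cases hjm : j + 1 ≤ m - 1
  · have hm' : j + 1 ∈ (Finset.Icc 1 (m - 1)).filter (fun j => B j ≤ x) := by
      simp only [Finset.mem_filter, Finset.mem_Icc]
      exact ⟨⟨by omega, hjm⟩, hcon⟩
    have : j + 1 ≤ binIdx m B x := Finset.le_sup (f := id) hm'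
    omega
  · have : j + 1 = m := by omega
    rw [this] at hcon
    linarith

/-- (Lower bound on output probabilities under the linear constraints of Theorem 6)
Under constraints (i) `q_j(i) ≥ q_{j+1}(i)`, (ii) `q_j(i) ≤ q_j(i+1)`, and (iii)
`q_{m−k+1}(m−r+1)(B r − B k) ≥ q_{m−k}(m−r+1)(B r − B (k+1))` for `s ≤ k ≤ t`, `k+2 ≤ r ≤ m`,
with `Λ = q_{t−1}(1) Σ_{r=t+1}^m q_{m−t+1}(m−r+1)(B r − B t)/(B r − B 1)` (the left limit of
`p(·,1)` at `B t`), we have `p(x,i) ≥ min(Λ, p(c,1))` for all `x ∈ [−c,c]`, `i ∈ {1,…,m}`. -/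
theorem output_prob_min_bound
    (m : ℕ) (hm : 4 ≤ m)
    (B : ℕ → ℝ)
    (hB : ∀ i j : ℕ, 1 ≤ i → i < j → j ≤ m → B i < B j)
    (hsym : ∀ i : ℕ, 1 ≤ i → i ≤ m → B i = -B (m + 1 - i))
    (c : ℝ) (hc : 0 < c)
    (s t : ℕ) (hs2 : 2 ≤ s) (hst : s ≤ t) (ht : t ≤ m - 1)
    (hs_lt : B (s - 1) < -c) (hs_gt : -c < B s)
    (ht_lt : B t < c) (ht_gt : c < B (t + 1))
    (q : ℕ → ℕ → ℝ)
    (hq_nonneg : ∀ n i : ℕ, 1 ≤ n → n ≤ m → 0 ≤ q n i)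
    (hq_sum : ∀ n : ℕ, 1 ≤ n → n ≤ m → ∑ i ∈ Finset.Icc 1 n, q n i = 1)
    (h1 : ∀ i j : ℕ, 1 ≤ i → i ≤ j → j ≤ m - 1 → q (j + 1) i ≤ q j i)
    (h2 : ∀ i j : ℕ, 1 ≤ i → i < j → j ≤ m → q j i ≤ q j (i + 1))
    (h3 : ∀ k r : ℕ, s ≤ k → k ≤ t → k + 2 ≤ r → r ≤ m →
      q (m - k) (m - r + 1) * (B r - B (k + 1)) ≤ q (m - k + 1) (m - r + 1) * (B r - B k)) :
    ∀ x ∈ Set.Icc (-c) c, ∀ i ∈ Finset.Icc 1 m,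
      min (q (t - 1) 1 * ∑ r ∈ Finset.Icc (t + 1) m,
            q (m - t + 1) (m - r + 1) * ((B r - B t) / (B r - B 1)))
          (pFun m B q c 1)
        ≤ pFun m B q x i := by
  have hBle : ∀ a b : ℕ, 1 ≤ a → a ≤ b → b ≤ m → B a ≤ B b := fun a b ha hab hb => by
    rcases hab.eq_or_lt with rfl | h
    · exact le_rfl
    · exact (hB a b ha h hb).le
  have hBlt : ∀ a b : ℕ, 1 ≤ b → a ≤ m → B a < B b → a < b := fun a b hb ha h => by
    by_contra! hcon
    exact absurd (hBle b a hb hcon ha) (not_le.mpr h)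
  have hst' : t + s = m + 1 := by
    have e1 := hsym s (by omega) (by omega)
    have e2 := hsym (s - 1) (by omega) (by omega)
    have l1 := hBlt (m + 1 - s) (t + 1) (by omega) (by omega) (by linarith)
    have l2 := hBlt t (m + 1 - (s - 1)) (by omega) (by omega) (by linarith)
    omega
  have hcm : c < B m := ht_gt.trans_le (hBle _ _ (by omega) (by omega) le_rfl)
  have hloc : ∀ x ∈ Set.Icc (-c) c, s - 1 ≤ binIdx m B x ∧ binIdx m B x ≤ t ∧
      B (binIdx m B x) ≤ x ∧ x < B (binIdx m B x + 1) := by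
    intro x hx
    obtain ⟨a1, a2, a3, a4⟩ := binIdx_spec m B x (s - 1) (by omega) (by omega)
      (by linarith [hx.1]) (by linarith [hx.2])
    have := hBlt (binIdx m B x) (t + 1) (by omega) (by omega) (by linarith [hx.2])
    exact ⟨a1, by omega, a3, a4⟩
  have hbc : binIdx m B c = t := by
    have := (binIdx_spec m B c t (by omega) ht ht_lt.le hcm).1
    have := (hloc c ⟨by linarith, le_rfl⟩).2.1
    omega
  have hΛ : q (t - 1) 1 * ∑ r ∈ Finset.Icc (t + 1) m,
      q (m - t + 1) (m - r + 1) * ((B r - B t) / (B r - B 1)) =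
      outProb m B q (t - 1) (B t) 1 := by
    have e1 : t - 1 + 1 = t := by omega
    have e2 : m - (t - 1) = m - t + 1 := by omega
    unfold outProb
    rw [if_pos (by omega), e1, e2]
    congr 1
    -- the sum in `outProb` has the extra term `r = t`, which is zero
    refine Finset.sum_subset (Finset.Icc_subset_Icc (by omega) le_rfl) fun r hr hr' => ?_
    simp only [Finset.mem_Icc] at hr hr'
    have : r = t := by omega
    simp [this]
  have hchain : ∀ k, s - 1 ≤ k → k + 1 ≤ t →
      outProb m B q (t - 1) (B t) 1 ≤ outProb m B q k (B (k + 1)) 1 := by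
    intro k hk hkt
    obtain ⟨d, hd⟩ : ∃ d, t = k + 1 + d := ⟨t - (k + 1), by omega⟩
    induction d generalizing k with
    | zero =>
      have e : t = k + 1 := by omega
      have e' : t - 1 = k := by omega
      rw [e', e]
    | succ d ih =>
      refine (ih (k + 1) (by omega) (by omega) (by omega)).trans ?_
      exact leftLimit_step m B q hB hq_nonneg h1 k (by omega) (by omega)
        fun r hr hrm => h3 (k + 1) r (by omega) (by omega) hr hrm
  -- the bound for outputs below the input, on closed cells
  have hmain : ∀ (j i : ℕ) (x : ℝ), s - 1 ≤ j → j ≤ t → 1 ≤ i → i ≤ j → x ≤ c → x ≤ B (j + 1) →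
      min (outProb m B q (t - 1) (B t) 1) (outProb m B q t c 1) ≤ outProb m B q j x i := by
    intro j i x hsj hjt hi hij hxc hxB
    rcases hjt.eq_or_lt with rfl | hlt
    · exact (min_le_right _ _).trans (outProb_ge_first m B q hB hq_nonneg h2 j i x c hi hij
        (by omega) hxc ht_gt.le)
    · exact (min_le_left _ _).trans ((hchain j hsj hlt).trans
        (outProb_ge_first m B q hB hq_nonneg h2 j i x _ hi hij (by omega) hxB le_rfl))
  intro x hx i hi
  rw [Finset.mem_Icc] at hi
  obtain ⟨a1, a2, a3, a4⟩ := hloc x hx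
  rw [hΛ]
  unfold pFun
  rw [hbc]
  generalize binIdx m B x = j at a1 a2 a3 a4
  by_cases hij : i ≤ j
  · exact hmain j i x a1 a2 hi.1 hij hx.2 a4.le
  · rw [outProb_reflect m B q hsym j i x (by omega) (by omega) hi.2]
    refine hmain (m - j) (m + 1 - i) (-x) (by omega) (by omega) (by omega) (by omega)
      (by linarith [hx.1]) ?_
    have e := hsym j (by omega) (by omega)
    have e' : m - j + 1 = m + 1 - j := by omega
    rw [e']
    linarith
end
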